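/- Any nonconstant bounded solution v of v'' = F'(v) on ℝ with −1 ≤ v ≤ 1 that tends to ±1 at ±∞ satisfies ∫_{-∞}^{∞} [(1/2)(v')² + F(v)] dy ≥ β = ∫_{-1}^{1} √(2F(s)) ds, with equality iff v is a translate of the heteroclinic g. -/

import Mathlib

open Real MeasureTheory

/-!
Since `u'` has `0` as a cluster value at `-∞`, conservation of energy for `u'' = F'(u)` gives
`u' ^ 2 = 2 * (F u - F a)`. Letting `u → a` and `u → b` in the equation shows that both wells are
critical points of `F`, and an interior zero of `F - F a` is critical because it is a minimum. By
uniqueness for the Cauchy problem, a nonconstant `u` with values in `[a, b]` therefore never meets a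
zero of `F - F a`, so `u` is an increasing bijection onto `(a, b)` with `u' = √(2 * (F u - F a))`,
and the substitution `s = u y` turns the energy into `∫ √(2 * (F s - F a))`.

Every heteroclinic from `a` to `b` crosses a given level `s ∈ (a, b)` with nonnegative slope, and
the energy identity fixes that slope. Two heteroclinics thus have, after a translation, a common
Cauchy datum. The set where they share their Cauchy data is closed, and it is open because one of
them stays in `(a, b)`, where the force is Lipschitz.
-/

section

open Set Filter Topology

theorem eq_of_mapClusterPt_of_tendsto {ι X : Type*} [TopologicalSpace X] [T2Space X]
    {l : Filter ι} {φ : ι → X} {x y : X} (hx : MapClusterPt x l φ) (hy : Tendsto φ l (𝓝 y)) :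
    x = y :=
  eq_of_nhds_neBot (ClusterPt.mono hx hy)

theorem mapClusterPt_deriv_zero {u : ℝ → ℝ} {l : Filter ℝ} [l.NeBot] [TendstoIxxClass Icc l l]
    {c : ℝ} (hl : Tendsto (· + 1) l l) (hu : Differentiable ℝ u) (hc : Tendsto u l (𝓝 c)) :
    MapClusterPt 0 l (deriv u) := by
  have mean_value (p : ℝ) : ∃ x ∈ Ioo p (p + 1), deriv u x = (u (p + 1) - u p) / (p + 1 - p) :=
    exists_deriv_eq_slope u (lt_add_one p) hu.continuous.continuousOn hu.differentiableOn
  choose x hx hux using mean_value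
  have hxl : Tendsto x l l := fun s hs =>
    (tendsto_smallSets_iff.1 (tendsto_id.Icc hl) s hs).mono fun p hp =>
      hp (Ioo_subset_Icc_self (hx p))
  refine MapClusterPt.of_comp hxl (Tendsto.mapClusterPt ?_)
  simpa [Function.comp_def, hux] using (hc.comp hl).sub hc

theorem exists_eq_and_deriv_nonneg {u : ℝ → ℝ} {a s : ℝ} (hu : Continuous u)
    (hbot : Tendsto u atBot (𝓝 a)) (has : a < s) (hs : ∃ y, s ≤ u y) :
    ∃ y, u y = s ∧ 0 ≤ deriv u y := by
  have hclosed : IsClosed {y | s ≤ u y} := isClosed_le continuous_const hu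
  obtain ⟨m, hm⟩ := eventually_atBot.1 (hbot.eventually_lt_const has)
  have hbdd : BddBelow {y | s ≤ u y} :=
    ⟨m, fun y hy => (not_le.1 fun hym => (hm y hym).not_ge hy).le⟩
  set y₀ := sInf {y | s ≤ u y}
  have hlt (t : ℝ) (ht : t < y₀) : u t < s := not_le.1 fun h => (csInf_le hbdd h).not_gt ht
  have hy₀ : u y₀ = s := by
    refine le_antisymm ?_ (hclosed.csInf_mem hs hbdd)
    exact le_of_tendsto ((hu.tendsto y₀).mono_left (nhdsWithin_le_nhds (s := Iio y₀)))
      (eventually_nhdsWithin_of_forall fun t ht => (hlt t ht).le)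
  refine ⟨y₀, hy₀, ?_⟩
  by_cases hd : DifferentiableAt ℝ u y₀
  · refine ge_of_tendsto (hasDerivAt_iff_tendsto_slope_left_right.1 hd.hasDerivAt).1
      (eventually_nhdsWithin_of_forall fun t (ht : t < y₀) => ?_)
    rw [slope_def_field, hy₀]
    exact div_nonneg_of_nonpos (sub_nonpos.2 (hlt t ht).le) (sub_nonpos.2 ht.le)
  · exact (deriv_zero_of_not_differentiableAt hd).ge

theorem continuousOn_image_of_continuousOn_comp {X Y Z : Type*} [TopologicalSpace X]
    [TopologicalSpace Y] [T2Space Y] [TopologicalSpace Z] {u : X → Y} {f : Y → Z} {K : Set X}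
    (hK : IsCompact K) (hu : ContinuousOn u K) (hfu : ContinuousOn (f ∘ u) K) :
    ContinuousOn f (u '' K) := by
  rw [continuousOn_iff_isClosed] at hfu ⊢
  intro t ht
  obtain ⟨c, hc, hct⟩ := hfu t ht
  refine ⟨u '' (c ∩ K), ((hK.inter_left hc).image_of_continuousOn
    (hu.mono inter_subset_right)).isClosed, ?_⟩
  rw [inter_eq_left.2 (image_mono inter_subset_right), ← hct, preimage_comp, image_preimage_inter]

theorem exists_lipschitzOnWith_derivWithin_Icc {F : ℝ → ℝ} {a b : ℝ} (hab : a < b)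
    (hF : ContDiffOn ℝ 2 F (Icc a b)) :
    ∃ L, LipschitzOnWith L (derivWithin F (Icc a b)) (Icc a b) :=
  (hF.derivWithin (m := 1) (uniqueDiffOn_Icc hab) (by norm_num)).exists_lipschitzOnWith one_ne_zero
    (convex_Icc a b) isCompact_Icc

theorem eq_of_deriv_deriv_eq_of_lipschitzOnWith {E : Type*} [NormedAddCommGroup E]
    [NormedSpace ℝ E] {h : E → E} {S : Set E} {L : NNReal} {u w : ℝ → E} {y₀ : ℝ}
    (hL : LipschitzOnWith L h S)
    (hu : Differentiable ℝ u) (hu' : Differentiable ℝ (deriv u))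
    (hw : Differentiable ℝ w) (hw' : Differentiable ℝ (deriv w))
    (huS : ∀ y, u y ∈ S) (hu2 : ∀ y, deriv (deriv u) y = h (u y))
    (hw2 : ∀ y, u y = w y → ∀ᶠ t in 𝓝 y, w t ∈ S ∧ deriv (deriv w) t = h (w t))
    (h0 : u y₀ = w y₀) (h1 : deriv u y₀ = deriv w y₀) : u = w := by
  let A : Set ℝ := {y | (u y, deriv u y) = (w y, deriv w y)}
  have hA_closed : IsClosed A := isClosed_eq (hu.continuous.prodMk hu'.continuous)
    (hw.continuous.prodMk hw'.continuous)
  have hlip : LipschitzOnWith (max 1 (L * 1)) (fun p : E × E => (p.2, h p.1)) (S ×ˢ univ) :=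
    LipschitzWith.prod_snd.lipschitzOnWith.prodMk
      (hL.comp LipschitzWith.prod_fst.lipschitzOnWith fun _ hp => hp.1)
  have hA_open : IsOpen A := by
    refine isOpen_iff_mem_nhds.2 fun y hy => ODE_solution_unique_of_eventually
      (v := fun _ p => (p.2, h p.1)) (s := fun _ => S ×ˢ univ)
      (f := fun t => (u t, deriv u t)) (g := fun t => (w t, deriv w t))
      (.of_forall fun _ => hlip) (.of_forall fun t => ⟨?_, huS t, mem_univ _⟩) ?_ hy
    · exact (hu t).hasDerivAt.prodMk (hu2 t ▸ (hu' t).hasDerivAt)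
    · filter_upwards [hw2 y (Prod.ext_iff.1 hy).1] with t ⟨htS, ht⟩
      exact ⟨(hw t).hasDerivAt.prodMk (ht ▸ (hw' t).hasDerivAt), htS, mem_univ _⟩
  have hA : A = univ := IsClopen.eq_univ ⟨hA_closed, hA_open⟩ ⟨y₀, Prod.ext h0 h1⟩
  exact funext fun y => (Prod.ext_iff.1 (hA.symm ▸ mem_univ y : y ∈ A)).1

section NewtonEquation

variable {f u : ℝ → ℝ}

theorem continuousOn_image_uIcc_of_deriv_deriv_eq (hu : ContDiff ℝ 2 u)
    (hode : ∀ y, deriv (deriv u) y = f (u y)) (p q : ℝ) : ContinuousOn f (u '' uIcc p q) := by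
  have hfu : Continuous (f ∘ u) :=
    (funext hode : deriv (deriv u) = f ∘ u) ▸ (hu.deriv' (n := 1)).continuous_deriv_one
  exact continuousOn_image_of_continuousOn_comp isCompact_uIcc hu.continuous.continuousOn
    hfu.continuousOn

theorem continuousOn_uIcc_of_deriv_deriv_eq (hu : ContDiff ℝ 2 u)
    (hode : ∀ y, deriv (deriv u) y = f (u y)) (p q : ℝ) : ContinuousOn f (uIcc (u p) (u q)) :=
  (continuousOn_image_uIcc_of_deriv_deriv_eq hu hode p q).mono
    (intermediate_value_uIcc hu.continuous.continuousOn)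

theorem deriv_sq_sub_deriv_sq_eq_integral (hu : ContDiff ℝ 2 u)
    (hode : ∀ y, deriv (deriv u) y = f (u y)) (p q : ℝ) :
    deriv u q ^ 2 - deriv u p ^ 2 = 2 * ∫ s in u p..u q, f s := by
  have hd : Differentiable ℝ u := hu.differentiable two_ne_zero
  have hd' : Differentiable ℝ (deriv u) := hu.differentiable_deriv_two
  have hd'' : Continuous (deriv (deriv u)) := (hu.deriv' (n := 1)).continuous_deriv_one
  have hsq (y : ℝ) : HasDerivAt (fun y => deriv u y ^ 2) (2 * (deriv (deriv u) y * deriv u y)) y :=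
    ((hd' y).hasDerivAt.pow 2).congr_deriv (by ring)
  calc deriv u q ^ 2 - deriv u p ^ 2
      = ∫ y in p..q, 2 * (deriv (deriv u) y * deriv u y) :=
        (intervalIntegral.integral_eq_sub_of_hasDerivAt (fun y _ => hsq y)
          (continuous_const.mul (hd''.mul hd'.continuous) |>.intervalIntegrable _ _)).symm
    _ = 2 * ∫ y in p..q, (f ∘ u) y * deriv u y := by
        simp only [intervalIntegral.integral_const_mul, hode, Function.comp_apply]
    _ = 2 * ∫ s in u p..u q, f s := by
        rw [intervalIntegral.integral_comp_mul_deriv'' hd.continuous.continuousOn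
          (fun y _ => (hd y).hasDerivAt.hasDerivWithinAt) hd'.continuous.continuousOn
          (continuousOn_image_uIcc_of_deriv_deriv_eq hu hode p q)]

end NewtonEquation

/-- A heteroclinic solution of `u'' = F'(u)` running from the rest point `a` to the rest point `b`.
No bound on the values of `u` is imposed, and `deriv F` is the two-sided derivative of `F`, with the
value `0` where `F` is not differentiable. -/
structure IsHeteroclinic (F : ℝ → ℝ) (a b : ℝ) (u : ℝ → ℝ) : Prop where
  contDiff : ContDiff ℝ 2 u
  deriv_deriv : ∀ y, deriv (deriv u) y = deriv F (u y)
  tendsto_atBot : Tendsto u atBot (𝓝 a)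
  tendsto_atTop : Tendsto u atTop (𝓝 b)

namespace IsHeteroclinic

variable {F g u : ℝ → ℝ} {a b : ℝ}

theorem differentiable (hu : IsHeteroclinic F a b u) : Differentiable ℝ u :=
  hu.contDiff.differentiable two_ne_zero

theorem differentiable_deriv (hu : IsHeteroclinic F a b u) : Differentiable ℝ (deriv u) :=
  hu.contDiff.differentiable_deriv_two

theorem comp_sub_const (hu : IsHeteroclinic F a b u) (K : ℝ) :
    IsHeteroclinic F a b fun y => u (y - K) where
  contDiff := hu.contDiff.comp (contDiff_id.sub contDiff_const)
  deriv_deriv y := by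
    rw [funext fun t => deriv_comp_sub_const u K t, deriv_comp_sub_const, hu.deriv_deriv]
  tendsto_atBot := hu.tendsto_atBot.comp (tendsto_atBot_add_const_right _ (-K) tendsto_id)
  tendsto_atTop := hu.tendsto_atTop.comp (tendsto_atTop_add_const_right _ (-K) tendsto_id)

theorem exists_eq_and_deriv_nonneg (hu : IsHeteroclinic F a b u) {s : ℝ} (hs : s ∈ Ioo a b) :
    ∃ y, u y = s ∧ 0 ≤ deriv u y :=
  _root_.exists_eq_and_deriv_nonneg hu.contDiff.continuous hu.tendsto_atBot hs.1
    ((hu.tendsto_atTop.eventually_const_lt hs.2).exists.imp fun _ => le_of_lt)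

theorem tendsto_integral_deriv_atBot (hu : IsHeteroclinic F a b u) (hFc : ContinuousOn F (Icc a b))
    (hFd : DifferentiableOn ℝ F (Ioo a b)) {q : ℝ} (hq : u q ∈ Ioc a b) :
    Tendsto (fun p => ∫ s in u p..u q, deriv F s) atBot (𝓝 (F (u q) - F a)) := by
  have hqI : u q ∈ Icc a b := Ioc_subset_Icc_self hq
  have haI : a ∈ Icc a b := left_mem_Icc.2 (hqI.1.trans hqI.2)
  have integral_deriv {c : ℝ} (hc : c ∈ Icc a b) (hcq : ContinuousOn (deriv F) (uIcc c (u q))) :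
      ∫ s in c..u q, deriv F s = F (u q) - F c :=
    intervalIntegral.integral_deriv_eq_sub_uIoo (hFc.mono (uIcc_subset_Icc hc hqI))
      (fun s hs => hFd.differentiableAt (isOpen_Ioo.mem_nhds (uIoo_subset_Ioo hc hqI hs)))
      hcq.intervalIntegrable
  -- Where `u` dips below `a` nothing is known about `F`, but `deriv F` stays continuous there,
  -- because `deriv F ∘ u = deriv (deriv u)` is.
  by_cases hbelow : ∃ p, u p < a
  · obtain ⟨p, hp⟩ := hbelow
    have hcont : ContinuousOn (deriv F) (uIcc (u p) (u q)) :=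
      continuousOn_uIcc_of_deriv_deriv_eq hu.contDiff hu.deriv_deriv p q
    have ha : uIcc (u p) (u q) ∈ 𝓝 a := mem_of_superset (Icc_mem_nhds hp hq.1) Icc_subset_uIcc
    rw [← integral_deriv haI (hcont.mono (uIcc_subset_uIcc_right (mem_of_mem_nhds ha)))]
    exact ((intervalIntegral.continuousOn_primitive_interval_left
      (hcont.integrableOn_compact isCompact_uIcc)).continuousAt ha).tendsto.comp hu.tendsto_atBot
  · push Not at hbelow
    have hmem : ∀ᶠ p in atBot, u p ∈ Icc a b :=
      (hu.tendsto_atBot.eventually_lt_const (hq.1.trans_le hq.2)).mono fun p hp =>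
        ⟨hbelow p, hp.le⟩
    refine (tendsto_const_nhds.sub ((hFc a haI).tendsto.comp
      (tendsto_nhdsWithin_iff.2 ⟨hu.tendsto_atBot, hmem⟩))).congr' ?_
    filter_upwards [hmem] with p hp
    exact (integral_deriv hp
      (continuousOn_uIcc_of_deriv_deriv_eq hu.contDiff hu.deriv_deriv p q)).symm

theorem deriv_sq_eq_of_mem_Ioc (hu : IsHeteroclinic F a b u) (hFc : ContinuousOn F (Icc a b))
    (hFd : DifferentiableOn ℝ F (Ioo a b)) {q : ℝ} (hq : u q ∈ Ioc a b) :
    deriv u q ^ 2 = 2 * (F (u q) - F a) := by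
  have hlim : Tendsto (fun p => deriv u p ^ 2) atBot
      (𝓝 (deriv u q ^ 2 - 2 * (F (u q) - F a))) := by
    refine (tendsto_const_nhds.sub
      ((hu.tendsto_integral_deriv_atBot hFc hFd hq).const_mul 2)).congr fun p => ?_
    rw [← deriv_sq_sub_deriv_sq_eq_integral hu.contDiff hu.deriv_deriv p q, sub_sub_cancel]
  have hcluster : MapClusterPt ((0 : ℝ) ^ 2) atBot (fun p => deriv u p ^ 2) :=
    (mapClusterPt_deriv_zero (tendsto_atBot_add_const_right _ 1 tendsto_id) hu.differentiable
      hu.tendsto_atBot).continuousAt_comp (continuous_pow 2).continuousAt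
  linarith [eq_of_mapClusterPt_of_tendsto hcluster hlim]

theorem deriv_sq_eq (hu : IsHeteroclinic F a b u) (hub : ∀ y, u y ∈ Icc a b)
    (hFc : ContinuousOn F (Icc a b)) (hFd : DifferentiableOn ℝ F (Ioo a b)) (y : ℝ) :
    deriv u y ^ 2 = 2 * (F (u y) - F a) := by
  rcases (hub y).1.eq_or_lt with hya | hya
  · have hmin : IsLocalMin u y := .of_forall fun t => hya ▸ (hub t).1
    rw [hmin.deriv_eq_zero, ← hya, sub_self]
    norm_num
  · exact hu.deriv_sq_eq_of_mem_Ioc hFc hFd ⟨hya, (hub y).2⟩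

theorem potential_left_le (hu : IsHeteroclinic F a b u) (hFc : ContinuousOn F (Icc a b))
    (hFd : DifferentiableOn ℝ F (Ioo a b)) {s : ℝ} (hs : s ∈ Ioo a b) : F a ≤ F s := by
  obtain ⟨y, rfl, -⟩ := hu.exists_eq_and_deriv_nonneg hs
  linarith [hu.deriv_sq_eq_of_mem_Ioc hFc hFd (Ioo_subset_Ioc_self hs), sq_nonneg (deriv u y)]

theorem deriv_deriv_eq_derivWithin (hu : IsHeteroclinic F a b u) (hab : a < b)
    (hub : ∀ y, u y ∈ Icc a b) (hF : ContDiffOn ℝ 1 F (Icc a b)) (y : ℝ) :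
    deriv (deriv u) y = derivWithin F (Icc a b) (u y) := by
  rw [hu.deriv_deriv]
  have hagree : EqOn (deriv F) (derivWithin F (Icc a b)) (Ioo a b) := fun s hs =>
    (derivWithin_of_mem_nhds (Icc_mem_nhds hs.1 hs.2)).symm
  -- At an endpoint `deriv F` could be a junk value, but it is continuous on the range of `u`.
  obtain ⟨s, hs⟩ : (Ioo a b).Nonempty := nonempty_Ioo.2 hab
  obtain ⟨z, rfl, -⟩ := hu.exists_eq_and_deriv_nonneg hs
  by_cases hzy : u z = u y
  · exact hzy ▸ hagree hs
  · have hcont : ContinuousOn (derivWithin F (Icc a b)) (uIcc (u z) (u y)) :=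
      (hF.continuousOn_derivWithin (uniqueDiffOn_Icc hab) le_rfl).mono
        (uIcc_subset_Icc (hub z) (hub y))
    exact (hagree.mono (uIoo_subset_Ioo (hub z) (hub y))).of_subset_closure
      (continuousOn_uIcc_of_deriv_deriv_eq hu.contDiff hu.deriv_deriv z y) hcont
      uIoo_subset_uIcc_self (closure_uIoo hzy).ge right_mem_uIcc

theorem potential_eq_left_and_derivWithin_eq_zero_of_tendsto (hu : IsHeteroclinic F a b u)
    (hab : a < b) (hub : ∀ y, u y ∈ Icc a b) (hF : ContDiffOn ℝ 1 F (Icc a b)) {l : Filter ℝ}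
    [l.NeBot] [TendstoIxxClass Icc l l] (hl : Tendsto (· + 1) l l) {e : ℝ}
    (he : Tendsto u l (𝓝 e)) : F e = F a ∧ derivWithin F (Icc a b) e = 0 := by
  have heI : e ∈ Icc a b := isClosed_Icc.mem_of_tendsto he (.of_forall hub)
  have hw : Tendsto u l (𝓝[Icc a b] e) := tendsto_nhdsWithin_iff.2 ⟨he, .of_forall hub⟩
  have hFd : DifferentiableOn ℝ F (Ioo a b) :=
    (hF.differentiableOn one_ne_zero).mono Ioo_subset_Icc_self
  have hsq : Tendsto (fun y => deriv u y ^ 2) l (𝓝 (2 * (F e - F a))) := by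
    simp only [hu.deriv_sq_eq hub hF.continuousOn hFd]
    exact (((hF.continuousOn e heI).tendsto.comp hw).sub_const _).const_mul 2
  have hFe : F e = F a := by
    have hcluster : MapClusterPt ((0 : ℝ) ^ 2) l (fun y => deriv u y ^ 2) :=
      (mapClusterPt_deriv_zero hl hu.differentiable he).continuousAt_comp
        (continuous_pow 2).continuousAt
    linarith [eq_of_mapClusterPt_of_tendsto hcluster hsq]
  have hderiv : Tendsto (deriv u) l (𝓝 0) := by
    refine (tendsto_zero_iff_abs_tendsto_zero _).2 ?_
    simpa [Function.comp_def, hFe, Real.sqrt_sq_eq_abs] using hsq.sqrt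
  have hderiv2 : Tendsto (deriv (deriv u)) l (𝓝 (derivWithin F (Icc a b) e)) := by
    simp only [funext (hu.deriv_deriv_eq_derivWithin hab hub hF)]
    exact (hF.continuousOn_derivWithin (uniqueDiffOn_Icc hab) le_rfl e heI).tendsto.comp hw
  exact ⟨hFe, (eq_of_mapClusterPt_of_tendsto
    (mapClusterPt_deriv_zero hl hu.differentiable_deriv hderiv) hderiv2).symm⟩

theorem potential_right_eq_left (hu : IsHeteroclinic F a b u) (hab : a < b)
    (hub : ∀ y, u y ∈ Icc a b) (hF : ContDiffOn ℝ 1 F (Icc a b)) : F b = F a :=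
  (hu.potential_eq_left_and_derivWithin_eq_zero_of_tendsto hab hub hF
    (tendsto_atTop_add_const_right _ 1 tendsto_id) hu.tendsto_atTop).1

theorem derivWithin_eq_zero_of_potential_eq_left (hu : IsHeteroclinic F a b u) (hab : a < b)
    (hub : ∀ y, u y ∈ Icc a b) (hF : ContDiffOn ℝ 1 F (Icc a b)) {s : ℝ} (hs : s ∈ Icc a b)
    (hFs : F s = F a) : derivWithin F (Icc a b) s = 0 := by
  rcases hs.1.eq_or_lt with rfl | has
  · exact (hu.potential_eq_left_and_derivWithin_eq_zero_of_tendsto hab hub hF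
      (tendsto_atBot_add_const_right _ 1 tendsto_id) hu.tendsto_atBot).2
  rcases hs.2.eq_or_lt with rfl | hsb
  · exact (hu.potential_eq_left_and_derivWithin_eq_zero_of_tendsto hab hub hF
      (tendsto_atTop_add_const_right _ 1 tendsto_id) hu.tendsto_atTop).2
  · have hmin : IsLocalMin F s := by
      filter_upwards [Ioo_mem_nhds has hsb] with t ht
      exact hFs ▸ hu.potential_left_le hF.continuousOn
        ((hF.differentiableOn one_ne_zero).mono Ioo_subset_Icc_self) ht
    rw [derivWithin_of_mem_nhds (Icc_mem_nhds has hsb), hmin.deriv_eq_zero]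

theorem potential_left_lt (hu : IsHeteroclinic F a b u) (hab : a < b) (hub : ∀ y, u y ∈ Icc a b)
    (hF : ContDiffOn ℝ 2 F (Icc a b)) (y : ℝ) : F a < F (u y) := by
  have hF1 : ContDiffOn ℝ 1 F (Icc a b) := hF.of_le one_le_two
  have hsq : deriv u y ^ 2 = 2 * (F (u y) - F a) := hu.deriv_sq_eq hub hF.continuousOn
    ((hF1.differentiableOn one_ne_zero).mono Ioo_subset_Icc_self) y
  by_contra! hle
  have hderiv : deriv u y = 0 :=
    (pow_eq_zero_iff two_ne_zero).1 (le_antisymm (by linarith) (sq_nonneg _))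
  have hFy : F (u y) = F a := by rw [hderiv] at hsq; linarith
  obtain ⟨L, hL⟩ := exists_lipschitzOnWith_derivWithin_Icc hab hF
  have hconst : u = fun _ => u y := by
    refine eq_of_deriv_deriv_eq_of_lipschitzOnWith (y₀ := y) hL hu.differentiable
      hu.differentiable_deriv (differentiable_const _) (by simp) hub
      (hu.deriv_deriv_eq_derivWithin hab hub hF1) (fun _ _ => .of_forall fun _ => ⟨hub y, ?_⟩) rfl
      (by simp [hderiv])
    simp [hu.derivWithin_eq_zero_of_potential_eq_left hab hub hF1 (hub y) hFy]
  have hbot : a = u y := tendsto_nhds_unique hu.tendsto_atBot (hconst ▸ tendsto_const_nhds)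
  have htop : b = u y := tendsto_nhds_unique hu.tendsto_atTop (hconst ▸ tendsto_const_nhds)
  exact hab.ne (hbot.trans htop.symm)

theorem mem_Ioo (hu : IsHeteroclinic F a b u) (hab : a < b) (hub : ∀ y, u y ∈ Icc a b)
    (hF : ContDiffOn ℝ 2 F (Icc a b)) (y : ℝ) : u y ∈ Ioo a b := by
  have hlt : F a < F (u y) := hu.potential_left_lt hab hub hF y
  refine ⟨(hub y).1.lt_of_ne fun h => hlt.ne (h ▸ rfl), (hub y).2.lt_of_ne fun h => hlt.ne' ?_⟩
  rw [h, hu.potential_right_eq_left hab hub (hF.of_le one_le_two)]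

theorem deriv_pos (hu : IsHeteroclinic F a b u) (hab : a < b) (hub : ∀ y, u y ∈ Icc a b)
    (hF : ContDiffOn ℝ 2 F (Icc a b)) (y : ℝ) : 0 < deriv u y := by
  by_contra! hy
  obtain ⟨s, hs⟩ : (Ioo a b).Nonempty := nonempty_Ioo.2 hab
  obtain ⟨z, -, hz⟩ := hu.exists_eq_and_deriv_nonneg hs
  obtain ⟨x, hx⟩ :=
    mem_range_of_exists_le_of_exists_ge hu.differentiable_deriv.continuous ⟨y, hy⟩ ⟨z, hz⟩
  have hsq := hu.deriv_sq_eq hub hF.continuousOn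
    ((hF.differentiableOn two_ne_zero).mono Ioo_subset_Icc_self) x
  rw [hx] at hsq
  linarith [hu.potential_left_lt hab hub hF x]

theorem range_eq_Ioo (hu : IsHeteroclinic F a b u) (hab : a < b) (hub : ∀ y, u y ∈ Icc a b)
    (hF : ContDiffOn ℝ 2 F (Icc a b)) : range u = Ioo a b :=
  (range_subset_iff.2 (hu.mem_Ioo hab hub hF)).antisymm fun _ hs =>
    (hu.exists_eq_and_deriv_nonneg hs).imp fun _ => And.left

theorem integral_energy_eq (hu : IsHeteroclinic F a b u) (hab : a < b) (hub : ∀ y, u y ∈ Icc a b)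
    (hF : ContDiffOn ℝ 2 F (Icc a b)) :
    ∫ y, ((1 / 2) * deriv u y ^ 2 + (F (u y) - F a)) = ∫ s in a..b, √(2 * (F s - F a)) := by
  have hsq := hu.deriv_sq_eq hub hF.continuousOn
    ((hF.differentiableOn two_ne_zero).mono Ioo_subset_Icc_self)
  have hpos := hu.deriv_pos hab hub hF
  calc ∫ y, ((1 / 2) * deriv u y ^ 2 + (F (u y) - F a))
      = ∫ y, |deriv u y| • √(2 * (F (u y) - F a)) := by
        refine integral_congr_ae (.of_forall fun y => ?_)
        simp only [← hsq y, Real.sqrt_sq (hpos y).le, abs_of_pos (hpos y), smul_eq_mul]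
        linarith [hsq y]
    _ = ∫ s in range u, √(2 * (F s - F a)) := by
        rw [← image_univ, integral_image_eq_integral_abs_deriv_smul .univ
          (fun y _ => (hu.differentiable y).hasDerivAt.hasDerivWithinAt)
          (strictMono_of_deriv_pos hpos).injective.injOn, setIntegral_univ]
    _ = ∫ s in a..b, √(2 * (F s - F a)) := by
        rw [hu.range_eq_Ioo hab hub hF, intervalIntegral.integral_of_le hab.le,
          integral_Ioc_eq_integral_Ioo]

theorem eq_of_eq_at (hu : IsHeteroclinic F a b u) (hg : IsHeteroclinic F a b g) (hab : a < b)
    (hub : ∀ y, u y ∈ Icc a b) (hF : ContDiffOn ℝ 2 F (Icc a b)) {y : ℝ} (h : u y = g y)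
    (h' : deriv u y = deriv g y) : u = g := by
  obtain ⟨L, hL⟩ := exists_lipschitzOnWith_derivWithin_Icc hab hF
  refine eq_of_deriv_deriv_eq_of_lipschitzOnWith hL hu.differentiable hu.differentiable_deriv
    hg.differentiable hg.differentiable_deriv hub
    (hu.deriv_deriv_eq_derivWithin hab hub (hF.of_le one_le_two)) (fun z hz => ?_) h h'
  have hgz : g z ∈ Ioo a b := hz ▸ hu.mem_Ioo hab hub hF z
  filter_upwards [hg.contDiff.continuous.continuousAt (isOpen_Ioo.mem_nhds hgz)] with t ht
  exact ⟨Ioo_subset_Icc_self ht,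
    by rw [hg.deriv_deriv, derivWithin_of_mem_nhds (Icc_mem_nhds ht.1 ht.2)]⟩

theorem exists_eq_comp_sub_const (hu : IsHeteroclinic F a b u) (hg : IsHeteroclinic F a b g)
    (hab : a < b) (hub : ∀ y, u y ∈ Icc a b) (hF : ContDiffOn ℝ 2 F (Icc a b)) :
    ∃ K, ∀ y, u y = g (y - K) := by
  have hFd : DifferentiableOn ℝ F (Ioo a b) :=
    (hF.differentiableOn two_ne_zero).mono Ioo_subset_Icc_self
  obtain ⟨s, hs⟩ : (Ioo a b).Nonempty := nonempty_Ioo.2 hab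
  obtain ⟨y, rfl, hy⟩ := hu.exists_eq_and_deriv_nonneg hs
  obtain ⟨z, hz, hz'⟩ := hg.exists_eq_and_deriv_nonneg hs
  have hderiv : deriv u y = deriv g z := by
    rw [← sq_eq_sq₀ hy hz', hu.deriv_sq_eq hub hF.continuousOn hFd,
      hg.deriv_sq_eq_of_mem_Ioc hF.continuousOn hFd (hz ▸ Ioo_subset_Ioc_self hs), hz]
  refine ⟨y - z, congrFun (hu.eq_of_eq_at (y := y) (hg.comp_sub_const (y - z)) hab hub hF ?_ ?_)⟩
  · rw [sub_sub_cancel, hz]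
  · rw [deriv_comp_sub_const, sub_sub_cancel, hderiv]

end IsHeteroclinic

theorem stmt_14_general {F g v : ℝ → ℝ} {a b : ℝ} (hab : a < b)
    (hF : ContDiffOn ℝ 2 F (Icc a b)) (hFa : F a = 0)
    (hg : IsHeteroclinic F a b g) (hv : IsHeteroclinic F a b v) (hvb : ∀ y, v y ∈ Icc a b) :
    (∫ y, ((1 / 2) * deriv v y ^ 2 + F (v y))) = ∫ s in a..b, √(2 * F s)
      ∧ ∃ K, ∀ y, v y = g (y - K) :=
  ⟨by simpa only [hFa, sub_zero] using hv.integral_energy_eq hab hvb hF,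
    hv.exists_eq_comp_sub_const hg hab hvb hF⟩

end

/-- The energy of a heteroclinic-type 1-D solution is at least `β`, with equality
iff it is a translate of the heteroclinic `g`. -/
theorem stmt_14
    (F g v : ℝ → ℝ) (β : ℝ)
    (hF : ContDiffOn ℝ 2 F (Set.Icc (-1) 1))
    (hFnonneg : ∀ s ∈ Set.Icc (-1 : ℝ) 1, 0 ≤ F s)
    (hF1 : F 1 = 0) (hFm1 : F (-1) = 0)
    (hβ : β = ∫ s in (-1 : ℝ)..1, Real.sqrt (2 * F s))
    (hg : ContDiff ℝ 2 g)
    (hgode : ∀ s : ℝ, deriv (deriv g) s = deriv F (g s))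
    (hgtop : Filter.Tendsto g Filter.atTop (nhds 1))
    (hgbot : Filter.Tendsto g Filter.atBot (nhds (-1)))
    (hv : ContDiff ℝ 2 v)
    (hvode : ∀ y : ℝ, deriv (deriv v) y = deriv F (v y))
    (hvb : ∀ y : ℝ, -1 ≤ v y ∧ v y ≤ 1)
    (hvtop : Filter.Tendsto v Filter.atTop (nhds 1))
    (hvbot : Filter.Tendsto v Filter.atBot (nhds (-1)))
    (hnonconst : ¬ ∃ c : ℝ, ∀ y : ℝ, v y = c) :
    β ≤ (∫ y : ℝ, ((1 / 2) * (deriv v y) ^ 2 + F (v y)))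
      ∧ ((∫ y : ℝ, ((1 / 2) * (deriv v y) ^ 2 + F (v y))) = β
          ↔ ∃ K : ℝ, ∀ y : ℝ, v y = g (y - K)) := by
  obtain ⟨henergy, htranslate⟩ := stmt_14_general (by norm_num) hF hFm1
    ⟨hg, hgode, hgbot, hgtop⟩ ⟨hv, hvode, hvbot, hvtop⟩ hvb
  exact hβ ▸ ⟨henergy.ge, fun _ => htranslate, fun _ => henergy⟩
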